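/- Let P be a topological space with a countable base and let {μ_p}_{p∈P} be a family of probability measures on ℝ^d, each absolutely continuous with respect to Lebesgue measure and 1-convex, depending continuously on p, with all supports contained in a single compact set. Then for every q ∈ P and every ε > 0 there exists a neighborhood U of q such that for all p ∈ U, cent μ_q is contained in the open ε-neighborhood of cent μ_p. -/

import Mathlib

open scoped InnerProductSpace ENNReal
open MeasureTheory

/-- The support of a measure `ν` on `ℝ`: the points all of whose open neighborhoods
have positive measure. -/
def msupport (ν : Measure ℝ) : Set ℝ :=
  {t | ∀ U : Set ℝ, IsOpen U → t ∈ U → 0 < ν U}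

/-- A measure `μ` on `ℝ^d` is `1`-convex if for every unit vector `u` the support of
the pushforward of `μ` under `x ↦ ⟪x, u⟫` is connected. -/
def OneConvex {d : ℕ} (μ : Measure (EuclideanSpace ℝ (Fin d))) : Prop :=
  ∀ u : EuclideanSpace ℝ (Fin d), ‖u‖ = 1 →
    IsConnected (msupport (μ.map fun x => ⟪x, u⟫_ℝ))

/-- The set of central points of a measure `μ` on `ℝ^d`: points `x` such that every
closed halfspace containing `x` has `μ`-measure at least `1/(d+1)`. -/
def cent {d : ℕ} (μ : Measure (EuclideanSpace ℝ (Fin d))) :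
    Set (EuclideanSpace ℝ (Fin d)) :=
  {x | ∀ (u : EuclideanSpace ℝ (Fin d)) (c : ℝ), ‖u‖ = 1 → c ≤ ⟪x, u⟫_ℝ →
    1 / ((d : ℝ≥0∞) + 1) ≤ μ {y | c ≤ ⟪y, u⟫_ℝ}}

/-!
Replacing closed halfspaces by open ones, and `≤` by `<`, gives strictly central points. By the
portmanteau theorem, applied to products with Dirac masses, strict centrality is an open condition
on the pair of a measure and a point, while centrality is a closed one.

If `μ` has a strictly central point, connectedness of the marginals makes the strictly central
points dense in `cent μ`, and finitely many of them, which remain central for nearby measures, form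
an `ε`-net of the compact set `cent μ`.

Otherwise take a central point `x` and consider the directions in which strictness fails at `x`.
If `0` were not in their convex hull, a small move of `x` away from them would yield a strictly
central point. So `0` is a convex combination, with positive weights, of affinely independent such
directions. The corresponding halfspaces at `x` cover `ℝ^d` and have measure at most `1 / (d + 1)`,
so there are `d + 1` of them, the directions positively span `ℝ^d`, and `cent μ = {x}`. Nearby
measures have central points by the centerpoint theorem, and these are close to `x` because
centrality is a closed condition.
-/

open Filter Module Set Topology TopologicalSpace

section Semicontinuity

variable {X Y : Type*} [MeasurableSpace X] [MeasurableSpace Y]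

lemma prod_diracProba_apply (μ : ProbabilityMeasure X) (y : Y) {s : Set (X × Y)}
    (hs : MeasurableSet s) :
    (μ.prod (diracProba y) : Measure (X × Y)) s = (μ : Measure X) {x | (x, y) ∈ s} := by
  rw [ProbabilityMeasure.toMeasure_prod, diracProba, ProbabilityMeasure.coe_mk,
    Measure.prod_dirac, Measure.map_apply measurable_prodMk_right hs]
  rfl

variable
  [TopologicalSpace X] [PseudoMetrizableSpace X] [SecondCountableTopology X]
  [OpensMeasurableSpace X]
  [TopologicalSpace Y] [PseudoMetrizableSpace Y] [SecondCountableTopology Y]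
  [OpensMeasurableSpace Y]

lemma continuous_prod_diracProba :
    Continuous fun z : ProbabilityMeasure X × Y => z.1.prod (diracProba z.2) :=
  ProbabilityMeasure.continuous_prod.comp
    (continuous_fst.prodMk (continuous_diracProba.comp continuous_snd))

lemma upperSemicontinuous_measure_slice {C : Set (X × Y)} (hC : IsClosed C) :
    UpperSemicontinuous fun z : ProbabilityMeasure X × Y =>
      (z.1 : Measure X) {x | (x, z.2) ∈ C} := by
  simp only [← prod_diracProba_apply _ _ hC.measurableSet]
  exact fun z => upperSemicontinuousAt_iff_limsup_le.2 <|
    ProbabilityMeasure.limsup_measure_closed_le_of_tendsto (continuous_prod_diracProba.tendsto z) hC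

lemma lowerSemicontinuous_measure_slice {U : Set (X × Y)} (hU : IsOpen U) :
    LowerSemicontinuous fun z : ProbabilityMeasure X × Y =>
      (z.1 : Measure X) {x | (x, z.2) ∈ U} := by
  simp only [← prod_diracProba_apply _ _ hU.measurableSet]
  exact fun z => lowerSemicontinuousAt_iff_le_liminf.2 <|
    ProbabilityMeasure.le_liminf_measure_open_of_tendsto (continuous_prod_diracProba.tendsto z) hU

end Semicontinuity

section ClosedGraph

variable {X Y : Type*} [TopologicalSpace X] [TopologicalSpace Y]

lemma eventually_subset_of_isClosed_graph {F : X → Set Y}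
    (hF : IsClosed {z : X × Y | z.2 ∈ F z.1}) {x : X} {K V : Set Y} (hK : IsCompact K)
    (hFK : ∀ᶠ x' in 𝓝 x, F x' ⊆ K) (hV : IsOpen V) (hFV : F x ⊆ V) :
    ∀ᶠ x' in 𝓝 x, F x' ⊆ V := by
  have hdisj : ∀ᶠ x' in 𝓝 x, ∀ y ∈ K \ V, y ∉ F x' :=
    (hK.diff hV).eventually_forall_of_forall_eventually fun y hy =>
      hF.isOpen_compl.eventually_mem fun hyF => hy.2 (hFV hyF)
  filter_upwards [hFK, hdisj] with x' hK' hdisj' y hy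
  exact by_contra fun hyV => hdisj' y ⟨hK' hy, hyV⟩ hy

end ClosedGraph

section ConvexHull

variable {E : Type*} [AddCommGroup E] [Module ℝ E] [FiniteDimensional ℝ E]

lemma convexHull_eq_biUnion_image_stdSimplex (A : Set E) :
    convexHull ℝ A = ⋃ n ∈ Iic (finrank ℝ E + 1),
      (fun p : (Fin n → ℝ) × (Fin n → E) => ∑ i, p.1 i • p.2 i) ''
        (stdSimplex ℝ (Fin n) ×ˢ univ.pi fun _ => A) := by
  refine Subset.antisymm (fun x hx => ?_) (iUnion₂_subset fun n _ => ?_)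
  · obtain ⟨ι, _, z, w, hzA, hz, hw, hw₁, rfl⟩ := eq_pos_convex_span_of_mem_convexHull hx
    have hcard : Fintype.card ι ≤ finrank ℝ E + 1 :=
      hz.card_le_finrank_succ.trans (Nat.succ_le_succ (Submodule.finrank_le _))
    let e := (Fintype.equivFin ι).symm
    exact mem_biUnion hcard ⟨(w ∘ e, z ∘ e),
      ⟨⟨fun i => (hw (e i)).le, (e.sum_comp w).trans hw₁⟩, fun i _ => hzA (mem_range_self (e i))⟩,
      e.sum_comp fun i => w i • z i⟩
  · rintro _ ⟨⟨w, z⟩, ⟨hw, hz⟩, rfl⟩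
    exact mem_convexHull_of_exists_fintype w z hw.1 hw.2 (fun i => hz i (mem_univ i)) rfl

lemma isCompact_convexHull [TopologicalSpace E] [IsTopologicalAddGroup E] [ContinuousSMul ℝ E]
    {A : Set E} (hA : IsCompact A) : IsCompact (convexHull ℝ A) := by
  rw [convexHull_eq_biUnion_image_stdSimplex]
  exact (finite_Iic _).isCompact_biUnion fun n _ =>
    ((isCompact_stdSimplex ℝ (Fin n)).prod (isCompact_univ_pi fun _ => hA)).image (by fun_prop)

end ConvexHull

section InnerProductSpace

variable {E : Type*} [NormedAddCommGroup E] [InnerProductSpace ℝ E]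

lemma exists_forall_inner_neg_of_zero_notMem_convexHull [FiniteDimensional ℝ E] {A : Set E}
    (hA : IsCompact A) (h₀ : (0 : E) ∉ convexHull ℝ A) : ∃ v : E, ∀ u ∈ A, ⟪v, u⟫_ℝ < 0 := by
  obtain ⟨f, c, hfA, hc⟩ := geometric_hahn_banach_closed_point
    (convex_convexHull ℝ A) (isCompact_convexHull hA).isClosed h₀
  refine ⟨(InnerProductSpace.toDual ℝ E).symm f, fun u hu => ?_⟩
  rw [InnerProductSpace.toDual_symm_apply]
  exact (hfA u (subset_convexHull ℝ A hu)).trans (by simpa using hc)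

lemma lt_one_of_finrank_mul_lt_one [FiniteDimensional ℝ E] {u : E} (hu : u ≠ 0) {α : ℝ≥0∞}
    (hα : finrank ℝ E * α < 1) : α < 1 := by
  have : Nontrivial E := ⟨u, 0, hu⟩
  have hfinrank : (1 : ℝ≥0∞) ≤ finrank ℝ E := Nat.one_le_cast.2 (finrank_pos (R := ℝ))
  exact (le_mul_of_one_le_left' hfinrank).trans_lt hα

/-- The hypotheses on `e` and `w` say that the vectors `e i` positively span the space. -/
lemma eq_zero_of_forall_inner_nonpos {ι : Type*} [Fintype ι] {e : ι → E} {w : ι → ℝ}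
    (hw : ∀ i, 0 < w i) (hwe : ∑ i, w i • e i = 0) (he : vectorSpan ℝ (range e) = ⊤)
    {v : E} (hv : ∀ i, ⟪v, e i⟫_ℝ ≤ 0) : v = 0 := by
  have hsum : ∑ i, w i * ⟪v, e i⟫_ℝ = 0 := by
    simp only [← real_inner_smul_right, ← inner_sum, hwe, inner_zero_right]
  have hzero (i : ι) : ⟪v, e i⟫_ℝ = 0 :=
    ((mul_eq_zero.1 ((Finset.sum_eq_zero_iff_of_nonpos fun i _ =>
      mul_nonpos_of_nonneg_of_nonpos (hw i).le (hv i)).1 hsum i (Finset.mem_univ i))).resolve_left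
      (hw i).ne')
  have hspan : (⊤ : Submodule ℝ E) ≤ LinearMap.ker (innerₛₗ ℝ v) := by
    rw [← he, vectorSpan, Submodule.span_le]
    rintro _ ⟨_, ⟨i, rfl⟩, _, ⟨j, rfl⟩, rfl⟩
    simp [inner_sub_right, hzero]
  exact inner_self_eq_zero.1 (hspan (Submodule.mem_top (x := v)))

end InnerProductSpace

section Covering

variable {X : Type*} [MeasurableSpace X] {μ : Measure X} [IsProbabilityMeasure μ] {α : ℝ≥0∞}

lemma one_le_card_mul_of_iUnion_eq_univ {ι : Type*} [Fintype ι] {s : ι → Set X}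
    (hs : ⋃ i, s i = univ) (hμ : ∀ i, μ (s i) ≤ α) : 1 ≤ Fintype.card ι * α :=
  calc 1 = μ (⋃ i, s i) := by rw [hs, measure_univ]
    _ ≤ ∑ i, μ (s i) := measure_iUnion_fintype_le μ s
    _ ≤ ∑ _i : ι, α := Finset.sum_le_sum fun i _ => hμ i
    _ = Fintype.card ι * α := by rw [Finset.sum_const, Finset.card_univ, nsmul_eq_mul]

lemma nonempty_sInter_of_card_mul_le_one {G : Finset (Set X)} (hG : G.card * α ≤ 1)
    (hμ : ∀ C ∈ G, μ Cᶜ < α) : (⋂₀ (G : Set (Set X))).Nonempty := by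
  by_contra hempty
  have hcover : ⋃ C ∈ G, Cᶜ = univ := by
    simpa [compl_sInter, sUnion_image] using congrArg compl (not_nonempty_iff_eq_empty.1 hempty)
  have hne : G.Nonempty := by
    rw [Finset.nonempty_iff_ne_empty]
    rintro rfl
    have := μ.nonempty_of_neZero
    exact hempty (by simp)
  refine (hG.trans_lt' ?_).false
  calc 1 = μ (⋃ C ∈ G, Cᶜ) := by rw [hcover, measure_univ]
    _ ≤ ∑ C ∈ G, μ Cᶜ := measure_biUnion_finset_le G _
    _ < ∑ _C ∈ G, α := ENNReal.sum_lt_sum_of_nonempty hne hμ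
    _ = G.card * α := by rw [Finset.sum_const, nsmul_eq_mul]

end Covering

section ConnectedSupport

variable {X : Type*} [TopologicalSpace X] [LinearOrder X] [OrderTopology X] [DenselyOrdered X]
  [HereditarilyLindelofSpace X] [MeasurableSpace X] [OpensMeasurableSpace X]

lemma measure_Ici_lt_measure_Ioi {ν : Measure X} [IsFiniteMeasure ν]
    (hν : IsPreconnected ν.support) {a b : X} (hab : a < b)
    (ha : ν (Iic a) ≠ 0) (hb : ν (Ici b) ≠ 0) : ν (Ici b) < ν (Ioi a) := by
  obtain ⟨s, hsa, hs⟩ := Measure.nonempty_inter_support_of_pos (pos_iff_ne_zero.2 ha)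
  obtain ⟨t, hbt, ht⟩ := Measure.nonempty_inter_support_of_pos (pos_iff_ne_zero.2 hb)
  obtain ⟨c, hac, hcb⟩ := exists_between hab
  have hc : c ∈ ν.support :=
    hν.Icc_subset hs ht ⟨hsa.trans hac.le, hcb.le.trans hbt⟩
  have hpos : 0 < ν (Ioo a b) := (Measure.mem_support_iff_forall c).1 hc _ (Ioo_mem_nhds hac hcb)
  calc ν (Ici b) < ν (Ioo a b) + ν (Ici b) := by
        rw [add_comm]
        exact ENNReal.lt_add_right (measure_ne_top ν _) hpos.ne'
    _ = ν (Ioi a) := by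
        rw [← measure_union (disjoint_left.2 fun _ h h' => h.2.not_ge h') measurableSet_Ici,
          Ioo_union_Ici_eq_Ioi hab]

end ConnectedSupport

section TukeyDepth

variable {E : Type*} [NormedAddCommGroup E] [InnerProductSpace ℝ E]

/-- The closed halfspace with inner normal `u` whose boundary hyperplane passes through `x`. -/
def halfspace (u x : E) : Set E :=
  {y | ⟪x, u⟫_ℝ ≤ ⟪y, u⟫_ℝ}

/-- The open halfspace with inner normal `u` whose boundary hyperplane passes through `x`. -/
def openHalfspace (u x : E) : Set E :=
  {y | ⟪x, u⟫_ℝ < ⟪y, u⟫_ℝ}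

lemma openHalfspace_subset_halfspace (u x : E) : openHalfspace u x ⊆ halfspace u x :=
  fun y (hy : ⟪x, u⟫_ℝ < ⟪y, u⟫_ℝ) => hy.le

lemma iUnion_halfspace_eq_univ_of_sum_smul_eq_zero {ι : Type*} [Fintype ι] [Nonempty ι]
    {e : ι → E} {w : ι → ℝ} (hw : ∀ i, 0 < w i) (hwe : ∑ i, w i • e i = 0) (x : E) :
    ⋃ i, halfspace (e i) x = univ := by
  refine eq_univ_of_forall fun y => mem_iUnion.2 ?_
  by_contra! hy
  have hneg (i : ι) : w i * ⟪y - x, e i⟫_ℝ < 0 := by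
    rw [inner_sub_left]
    exact mul_neg_of_pos_of_neg (hw i) (sub_neg.2 (not_le.1 (hy i)))
  have hsum : ∑ i, w i * ⟪y - x, e i⟫_ℝ = 0 := by
    simp only [← real_inner_smul_right, ← inner_sum, hwe, inner_zero_right]
  exact (Finset.sum_neg (fun i _ => hneg i) Finset.univ_nonempty).ne hsum

variable [MeasurableSpace E]

lemma measure_halfspace_eq_measure_openHalfspace {ν : Measure E} {u x : E}
    (hν : ν {y | ⟪y, u⟫_ℝ = ⟪x, u⟫_ℝ} = 0) : ν (halfspace u x) = ν (openHalfspace u x) := by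
  refine le_antisymm ?_ (measure_mono (openHalfspace_subset_halfspace u x))
  calc ν (halfspace u x) ≤ ν (openHalfspace u x ∪ {y | ⟪y, u⟫_ℝ = ⟪x, u⟫_ℝ}) :=
        measure_mono fun y (hy : ⟪x, u⟫_ℝ ≤ ⟪y, u⟫_ℝ) => hy.lt_or_eq'
    _ ≤ ν (openHalfspace u x) + ν {y | ⟪y, u⟫_ℝ = ⟪x, u⟫_ℝ} := measure_union_le _ _
    _ = ν (openHalfspace u x) := by rw [hν, add_zero]

/-- The Tukey depth region of level `α`: the points all of whose closed halfspaces have measure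
at least `α`. For `α = 1 / (dim E + 1)` these are the central points of `μ`. -/
def depthRegion (μ : Measure E) (α : ℝ≥0∞) : Set E :=
  {x | ∀ u, ‖u‖ = 1 → α ≤ μ (halfspace u x)}

/-- The strict variant of `depthRegion`. It is defined with open halfspaces, which makes it stable
under weak perturbations of `μ`. -/
def strictDepthRegion (μ : Measure E) (α : ℝ≥0∞) : Set E :=
  {x | ∀ u, ‖u‖ = 1 → α < μ (openHalfspace u x)}

/-- The unit normals of the open halfspaces at `x` witnessing that `x` is not strictly deep. -/
def shallowDirections (μ : Measure E) (α : ℝ≥0∞) (x : E) : Set E :=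
  {u | ‖u‖ = 1 ∧ μ (openHalfspace u x) ≤ α}

lemma strictDepthRegion_subset_depthRegion (ν : Measure E) (α : ℝ≥0∞) :
    strictDepthRegion ν α ⊆ depthRegion ν α :=
  fun x hx u hu => (hx u hu).le.trans (measure_mono (openHalfspace_subset_halfspace u x))

variable {α : ℝ≥0∞}

lemma depthRegion_subset_ball {μ : Measure E} {R : ℝ} (hR : 0 < R)
    (hμ : μ (Metric.ball 0 R)ᶜ < α) : depthRegion μ α ⊆ Metric.ball 0 R := by
  intro x hx
  by_contra hxR
  have hRx : R ≤ ‖x‖ := by simpa using hxR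
  have hx₀ : x ≠ 0 := norm_pos_iff.1 (hR.trans_le hRx)
  have hu : ‖‖x‖⁻¹ • x‖ = 1 := norm_smul_inv_norm (𝕜 := ℝ) hx₀
  have hsub : halfspace (‖x‖⁻¹ • x) x ⊆ (Metric.ball 0 R)ᶜ := by
    intro y (hy : ⟪x, ‖x‖⁻¹ • x⟫_ℝ ≤ ⟪y, ‖x‖⁻¹ • x⟫_ℝ)
    have hxy : ‖x‖ ≤ ‖y‖ := by
      calc ‖x‖ = ⟪x, ‖x‖⁻¹ • x⟫_ℝ := by
            rw [real_inner_smul_right, real_inner_self_eq_norm_sq]; field_simp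
        _ ≤ ⟪y, ‖x‖⁻¹ • x⟫_ℝ := hy
        _ ≤ ‖y‖ * ‖‖x‖⁻¹ • x‖ := real_inner_le_norm _ _
        _ = ‖y‖ := by rw [hu, mul_one]
    simpa using hRx.trans hxy
  exact ((hx _ hu).trans (measure_mono hsub)).not_gt hμ

section WeakTopology

variable [FiniteDimensional ℝ E] [BorelSpace E]

lemma upperSemicontinuous_measure_halfspace :
    UpperSemicontinuous fun z : ProbabilityMeasure E × E × E =>
      (z.1 : Measure E) (halfspace z.2.2 z.2.1) :=
  upperSemicontinuous_measure_slice
    (C := {p : E × E × E | ⟪p.2.1, p.2.2⟫_ℝ ≤ ⟪p.1, p.2.2⟫_ℝ})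
    (isClosed_le (by fun_prop) (by fun_prop))

lemma lowerSemicontinuous_measure_openHalfspace :
    LowerSemicontinuous fun z : ProbabilityMeasure E × E × E =>
      (z.1 : Measure E) (openHalfspace z.2.2 z.2.1) :=
  lowerSemicontinuous_measure_slice
    (U := {p : E × E × E | ⟪p.2.1, p.2.2⟫_ℝ < ⟪p.1, p.2.2⟫_ℝ})
    (isOpen_lt (by fun_prop) (by fun_prop))

lemma isClosed_graph_depthRegion :
    IsClosed {z : ProbabilityMeasure E × E | z.2 ∈ depthRegion (z.1 : Measure E) α} := by
  change IsClosed {z : ProbabilityMeasure E × E |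
    ∀ u, ‖u‖ = 1 → α ≤ (z.1 : Measure E) (halfspace u z.2)}
  simp only [ofPred_forall]
  exact isClosed_iInter fun u => isClosed_iInter fun _ =>
    (upperSemicontinuous_measure_halfspace.comp
      (g := fun z : ProbabilityMeasure E × E => (z.1, z.2, u)) (by fun_prop)).isClosed_preimage α

lemma isOpen_graph_strictDepthRegion :
    IsOpen {z : ProbabilityMeasure E × E | z.2 ∈ strictDepthRegion (z.1 : Measure E) α} := by
  refine isOpen_iff_eventually.2 fun z hz => ?_
  have hsphere := (isCompact_sphere (0 : E) 1).eventually_forall_of_forall_eventually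
    (x₀ := z) (P := fun z u => α < (z.1 : Measure E) (openHalfspace u z.2)) fun u hu =>
      (lowerSemicontinuous_measure_openHalfspace.comp
        (g := fun p : (ProbabilityMeasure E × E) × E => (p.1.1, p.1.2, p.2))
        (by fun_prop)) (z, u) α (hz u (mem_sphere_zero_iff_norm.1 hu))
  filter_upwards [hsphere] with z' hz' u hu
  exact hz' u (mem_sphere_zero_iff_norm.2 hu)

lemma isCompact_shallowDirections (μ : ProbabilityMeasure E) (x : E) :
    IsCompact (shallowDirections (μ : Measure E) α x) := by
  have hclosed : IsClosed {u | (μ : Measure E) (openHalfspace u x) ≤ α} :=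
    (lowerSemicontinuous_measure_openHalfspace.comp (g := fun u => (μ, x, u))
      (by fun_prop)).isClosed_preimage α
  convert (isCompact_sphere (0 : E) 1).inter_right hclosed using 1
  ext u
  simp [shallowDirections]

lemma exists_eventually_depthRegion_subset_ball (μ : ProbabilityMeasure E) (hα : α ≠ 0) :
    ∃ R, ∀ᶠ ν : ProbabilityMeasure E in 𝓝 μ, depthRegion (ν : Measure E) α ⊆ Metric.ball 0 R := by
  obtain ⟨K, -, hK, hμK⟩ := MeasurableSet.univ.exists_isCompact_sdiff_lt
    (measure_ne_top (μ : Measure E) univ) hα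
  obtain ⟨R, hR, hKR⟩ := hK.isBounded.subset_ball_lt 0 0
  have hμR : (μ : Measure E) (Metric.ball 0 R)ᶜ < α :=
    (measure_mono (compl_subset_compl.2 hKR)).trans_lt (by rwa [compl_eq_univ_sdiff])
  have husc : ∀ᶠ ν : ProbabilityMeasure E in 𝓝 μ, (ν : Measure E) (Metric.ball 0 R)ᶜ < α :=
    eventually_lt_of_limsup_lt <| (ProbabilityMeasure.limsup_measure_closed_le_of_tendsto
      tendsto_id Metric.isOpen_ball.isClosed_compl).trans_lt hμR
  exact ⟨R, husc.mono fun ν hν => depthRegion_subset_ball hR hν⟩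

lemma eventually_depthRegion_subset {μ : ProbabilityMeasure E} (hα : α ≠ 0) {V : Set E}
    (hV : IsOpen V) (hμV : depthRegion (μ : Measure E) α ⊆ V) :
    ∀ᶠ ν : ProbabilityMeasure E in 𝓝 μ, depthRegion (ν : Measure E) α ⊆ V := by
  obtain ⟨R, hR⟩ := exists_eventually_depthRegion_subset_ball μ hα
  exact eventually_subset_of_isClosed_graph (F := fun ν : ProbabilityMeasure E => depthRegion ν α)
    isClosed_graph_depthRegion (isCompact_closedBall 0 R)
    (hR.mono fun ν hν => hν.trans Metric.ball_subset_closedBall) hV hμV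

lemma isCompact_depthRegion (μ : ProbabilityMeasure E) (hα : α ≠ 0) :
    IsCompact (depthRegion (μ : Measure E) α) := by
  obtain ⟨R, hR⟩ := exists_eventually_depthRegion_subset_ball μ hα
  exact Metric.isCompact_of_isClosed_isBounded
    (isClosed_graph_depthRegion.preimage (Continuous.prodMk_right μ))
    (Metric.isBounded_ball.subset hR.self_of_nhds)

end WeakTopology

section Centerpoint

variable [FiniteDimensional ℝ E] [BorelSpace E]

lemma exists_isCompact_convex_notMem_of_notMem_depthRegion {μ : Measure E} [IsFiniteMeasure μ]
    {x : E} (hx : x ∉ depthRegion μ α) :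
    ∃ C, IsCompact C ∧ Convex ℝ C ∧ μ Cᶜ < α ∧ x ∉ C := by
  simp only [depthRegion, mem_ofPred_eq, not_forall, not_le] at hx
  obtain ⟨u, -, hu⟩ := hx
  let D : Set E := {y | ⟪y, u⟫_ℝ < ⟪x, u⟫_ℝ}
  have hDopen : IsOpen D := isOpen_lt (by fun_prop) (by fun_prop)
  have hDconvex : Convex ℝ D := convex_halfSpace_lt ((innerₛₗ ℝ).flip u).isLinear _
  obtain ⟨K, hKD, hK, hμK⟩ := hDopen.measurableSet.exists_isCompact_sdiff_lt
    (measure_ne_top μ D) (tsub_pos_iff_lt.2 hu).ne'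
  refine ⟨convexHull ℝ K, isCompact_convexHull hK, convex_convexHull ℝ K, ?_,
    fun hxK => lt_irrefl ⟪x, u⟫_ℝ (convexHull_min hKD hDconvex hxK)⟩
  calc μ (convexHull ℝ K)ᶜ ≤ μ (halfspace u x ∪ D \ K) := measure_mono fun y hy => by
        obtain hyD | hyD := lt_or_ge ⟪y, u⟫_ℝ ⟪x, u⟫_ℝ
        · exact Or.inr ⟨hyD, fun hyK => hy (subset_convexHull ℝ K hyK)⟩
        · exact Or.inl hyD
    _ ≤ μ (halfspace u x) + μ (D \ K) := measure_union_le _ _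
    _ < μ (halfspace u x) + (α - μ (halfspace u x)) := by
        gcongr
        exact measure_ne_top _ _
    _ = α := add_tsub_cancel_of_le hu.le

lemma depthRegion_nonempty (μ : Measure E) [IsProbabilityMeasure μ]
    (hα : (finrank ℝ E + 1) * α ≤ 1) : (depthRegion μ α).Nonempty := by
  let 𝒞 : Set (Set E) := {C | IsCompact C ∧ Convex ℝ C ∧ μ Cᶜ < α}
  have h𝒞 : (⋂₀ 𝒞).Nonempty :=
    Convex.helly_theorem_set_compact' (𝕜 := ℝ) (fun C hC => hC.2.1) (fun C hC => hC.1)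
      fun G hG𝒞 hG => nonempty_sInter_of_card_mul_le_one (μ := μ)
        (le_trans (by gcongr; exact_mod_cast hG) hα) fun C hC => (hG𝒞 hC).2.2
  refine h𝒞.mono fun x hx => by_contra fun hxμ => ?_
  obtain ⟨C, hC, hCconvex, hμC, hxC⟩ := exists_isCompact_convex_notMem_of_notMem_depthRegion hxμ
  exact hxC (hx C ⟨hC, hCconvex, hμC⟩)

end Centerpoint

section ConnectedMarginals

/-- All one-dimensional marginals of `μ` have preconnected support. This is `1`-convexity in an
arbitrary inner product space, for measures that may vanish. -/
def HasPreconnectedMarginals (μ : Measure E) : Prop :=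
  ∀ u, ‖u‖ = 1 → IsPreconnected (μ.map fun y => ⟪y, u⟫_ℝ).support

variable [BorelSpace E] {μ : Measure E} [IsProbabilityMeasure μ]

/-- This is where the connectedness of the marginals enters: a marginal charges every interval
that separates two sets of positive mass. -/
lemma lt_measure_openHalfspace {u x z : E}
    (hconv : IsPreconnected (μ.map fun y => ⟪y, u⟫_ℝ).support) (hα₀ : α ≠ 0) (hα₁ : α < 1)
    (hzx : ⟪z, u⟫_ℝ < ⟪x, u⟫_ℝ) (hx : α ≤ μ (halfspace u x)) :
    α < μ (openHalfspace u z) := by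
  have hmeas : Measurable fun y : E => ⟪y, u⟫_ℝ := by fun_prop
  have hprob : IsProbabilityMeasure (μ.map fun y => ⟪y, u⟫_ℝ) :=
    Measure.isProbabilityMeasure_map hmeas.aemeasurable
  set ν := μ.map fun y => ⟪y, u⟫_ℝ
  have hIci : ν (Ici ⟪x, u⟫_ℝ) = μ (halfspace u x) := Measure.map_apply hmeas measurableSet_Ici
  have hIoi : ν (Ioi ⟪z, u⟫_ℝ) = μ (openHalfspace u z) := Measure.map_apply hmeas measurableSet_Ioi
  by_cases hIic : ν (Iic ⟪z, u⟫_ℝ) = 0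
  · rwa [← hIoi, ← compl_Iic, (prob_compl_eq_one_iff measurableSet_Iic).2 hIic]
  · rw [← hIoi]
    refine (hx.trans_eq hIci.symm).trans_lt (measure_Ici_lt_measure_Ioi hconv hzx hIic ?_)
    exact hIci ▸ ((pos_iff_ne_zero.2 hα₀).trans_le hx).ne'

lemma openSegment_subset_strictDepthRegion
    (hconv : HasPreconnectedMarginals μ) (hα₀ : α ≠ 0)
    {x z : E} (hx : x ∈ depthRegion μ α) (hz : z ∈ strictDepthRegion μ α) :
    openSegment ℝ x z ⊆ strictDepthRegion μ α := by
  rintro _ ⟨a, b, ha, hb, hab, rfl⟩ u hu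
  obtain rfl : a = 1 - b := by linarith
  have hinner : ⟪(1 - b) • x + b • z, u⟫_ℝ = (1 - b) * ⟪x, u⟫_ℝ + b * ⟪z, u⟫_ℝ := by
    rw [inner_add_left, real_inner_smul_left, real_inner_smul_left]
  obtain hzx | hxz := lt_or_ge ⟪z, u⟫_ℝ ⟪x, u⟫_ℝ
  · refine lt_measure_openHalfspace (hconv u hu) hα₀ ((hz u hu).trans_le prob_le_one) ?_ (hx u hu)
    nlinarith [mul_pos hb (sub_pos.2 hzx)]
  · refine (hz u hu).trans_le (measure_mono fun y (hy : ⟪z, u⟫_ℝ < ⟪y, u⟫_ℝ) => ?_)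
    refine lt_of_le_of_lt ?_ hy
    nlinarith [mul_nonneg ha.le (sub_nonneg.2 hxz)]

lemma depthRegion_subset_closure_strictDepthRegion
    (hconv : HasPreconnectedMarginals μ) (hα₀ : α ≠ 0)
    (hne : (strictDepthRegion μ α).Nonempty) :
    depthRegion μ α ⊆ closure (strictDepthRegion μ α) := by
  obtain ⟨z, hz⟩ := hne
  exact fun x hx => closure_mono (openSegment_subset_strictDepthRegion hconv hα₀ hx hz)
    (segment_subset_closure_openSegment (left_mem_segment ℝ x z))

end ConnectedMarginals

section Dichotomy

lemma vectorSpan_eq_top_of_shallowDirections [FiniteDimensional ℝ E] {μ : Measure E}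
    [IsProbabilityMeasure μ] {x : E} {ι : Type*} [Fintype ι] {e : ι → E} {w : ι → ℝ}
    (hnull : ∀ u c, ‖u‖ = 1 → μ {y | ⟪y, u⟫_ℝ = c} = 0)
    (hα : finrank ℝ E * α < 1) (he : AffineIndependent ℝ e)
    (hshallow : ∀ i, e i ∈ shallowDirections μ α x)
    (hw : ∀ i, 0 < w i) (hw₁ : ∑ i, w i = 1) (hwe : ∑ i, w i • e i = 0) :
    vectorSpan ℝ (range e) = ⊤ := by
  have : Nonempty ι := by
    by_contra! h
    simp at hw₁
  have hcover : 1 ≤ Fintype.card ι * α := one_le_card_mul_of_iUnion_eq_univ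
    (iUnion_halfspace_eq_univ_of_sum_smul_eq_zero hw hwe x) fun i => by
      rw [measure_halfspace_eq_measure_openHalfspace (hnull _ _ (hshallow i).1)]
      exact (hshallow i).2
  have hlower : finrank ℝ E < Fintype.card ι := by
    by_contra! hle
    exact (hcover.trans (by gcongr)).not_gt hα
  have hupper : Fintype.card ι ≤ finrank ℝ E + 1 :=
    he.card_le_finrank_succ.trans (Nat.succ_le_succ (Submodule.finrank_le _))
  exact he.vectorSpan_eq_top_of_card_eq_finrank_add_one (le_antisymm hupper hlower)

variable [FiniteDimensional ℝ E] [BorelSpace E] {μ : ProbabilityMeasure E} {x : E}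

lemma strictDepthRegion_nonempty_of_zero_notMem_convexHull
    (hconv : HasPreconnectedMarginals (μ : Measure E))
    (hα₀ : α ≠ 0) (hα : finrank ℝ E * α < 1) (hx : x ∈ depthRegion (μ : Measure E) α)
    (h₀ : (0 : E) ∉ convexHull ℝ (shallowDirections (μ : Measure E) α x)) :
    (strictDepthRegion (μ : Measure E) α).Nonempty := by
  obtain ⟨v, hv⟩ := exists_forall_inner_neg_of_zero_notMem_convexHull
    (isCompact_shallowDirections μ x) h₀
  have hK : IsCompact (Metric.sphere (0 : E) 1 ∩ {u | 0 ≤ ⟪v, u⟫_ℝ}) :=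
    (isCompact_sphere 0 1).inter_right (isClosed_le (by fun_prop) (by fun_prop))
  have hdeep : ∀ u ∈ Metric.sphere (0 : E) 1 ∩ {u | 0 ≤ ⟪v, u⟫_ℝ},
      α < (μ : Measure E) (openHalfspace u x) := fun u ⟨hu, huv⟩ =>
    lt_of_not_ge fun hle => (hv u ⟨mem_sphere_zero_iff_norm.1 hu, hle⟩).not_ge huv
  have hsmall : ∀ᶠ t in 𝓝 (0 : ℝ), ∀ u ∈ Metric.sphere (0 : E) 1 ∩ {u | 0 ≤ ⟪v, u⟫_ℝ},
      α < (μ : Measure E) (openHalfspace u (x + t • v)) :=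
    hK.eventually_forall_of_forall_eventually fun u hu =>
      (lowerSemicontinuous_measure_openHalfspace.comp
        (g := fun p : ℝ × E => (μ, x + p.1 • v, p.2)) (by fun_prop)) (0, u) α
        (by simpa using hdeep u hu)
  obtain ⟨t, ht, ht₀⟩ :=
    ((hsmall.filter_mono nhdsWithin_le_nhds).and (self_mem_nhdsWithin (s := Ioi 0))).exists
  refine ⟨x + t • v, fun u hu => ?_⟩
  obtain huv | huv := le_or_gt 0 ⟪v, u⟫_ℝ
  · exact ht u ⟨mem_sphere_zero_iff_norm.2 hu, huv⟩
  · have hu₀ : u ≠ 0 := norm_ne_zero_iff.1 (hu ▸ one_ne_zero)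
    refine lt_measure_openHalfspace (hconv u hu) hα₀ (lt_one_of_finrank_mul_lt_one hu₀ hα) ?_
      (hx u hu)
    rw [inner_add_left, real_inner_smul_left]
    exact add_lt_of_neg_right _ (mul_neg_of_pos_of_neg ht₀ huv)

lemma depthRegion_subset_singleton_of_zero_mem_convexHull
    (hconv : HasPreconnectedMarginals (μ : Measure E))
    (hnull : ∀ u c, ‖u‖ = 1 → (μ : Measure E) {y | ⟪y, u⟫_ℝ = c} = 0)
    (hα₀ : α ≠ 0) (hα : finrank ℝ E * α < 1)
    (h₀ : (0 : E) ∈ convexHull ℝ (shallowDirections (μ : Measure E) α x)) :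
    depthRegion (μ : Measure E) α ⊆ {x} := by
  obtain ⟨ι, _, e, w, hrange, he, hw, hw₁, hwe⟩ := eq_pos_convex_span_of_mem_convexHull h₀
  have hshallow (i : ι) := hrange (mem_range_self i)
  intro y hy
  have hyx (i : ι) : ⟪y - x, e i⟫_ℝ ≤ 0 := by
    have hu := (hshallow i).1
    rw [inner_sub_left, sub_nonpos]
    by_contra! hxy
    have hu₀ : e i ≠ 0 := norm_ne_zero_iff.1 (hu ▸ one_ne_zero)
    exact (lt_measure_openHalfspace (hconv _ hu) hα₀ (lt_one_of_finrank_mul_lt_one hu₀ hα)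
      hxy (hy _ hu)).not_ge (hshallow i).2
  exact sub_eq_zero.1 <| eq_zero_of_forall_inner_nonpos hw hwe
    (vectorSpan_eq_top_of_shallowDirections hnull hα he hshallow hw hw₁ hwe) hyx

end Dichotomy

section LowerSemicontinuity

variable [FiniteDimensional ℝ E] [BorelSpace E] {μ : ProbabilityMeasure E} {ε : ℝ}

lemma eventually_subset_thickening_of_subset_closure_strictDepthRegion {K : Set E}
    (hK : IsCompact K) (hKμ : K ⊆ closure (strictDepthRegion (μ : Measure E) α)) (hε : 0 < ε) :
    ∀ᶠ ν : ProbabilityMeasure E in 𝓝 μ,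
      K ⊆ Metric.thickening ε (depthRegion (ν : Measure E) α) := by
  have hcover : K ⊆ ⋃ z ∈ strictDepthRegion (μ : Measure E) α, Metric.ball z ε := by
    rw [← Metric.thickening_eq_biUnion_ball]
    exact hKμ.trans (Metric.closure_subset_thickening hε _)
  obtain ⟨T, hTμ, hT, hKT⟩ := hK.elim_finite_subcover_image (fun _ _ => Metric.isOpen_ball) hcover
  have hstable : ∀ᶠ ν : ProbabilityMeasure E in 𝓝 μ, ∀ z ∈ T,
      z ∈ strictDepthRegion (ν : Measure E) α :=
    hT.eventually_all.2 fun z hz =>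
      (isOpen_graph_strictDepthRegion.preimage (Continuous.prodMk_left z)).mem_nhds (hTμ hz)
  filter_upwards [hstable] with ν hν x hx
  obtain ⟨z, hz, hxz⟩ := mem_iUnion₂.1 (hKT hx)
  exact Metric.mem_thickening_iff.2 ⟨z, strictDepthRegion_subset_depthRegion _ _ (hν z hz), hxz⟩

lemma eventually_subset_thickening_of_depthRegion_subset_singleton (hα₀ : α ≠ 0)
    (hα : (finrank ℝ E + 1) * α ≤ 1) {x : E} (hx : depthRegion (μ : Measure E) α ⊆ {x})
    (hε : 0 < ε) : ∀ᶠ ν : ProbabilityMeasure E in 𝓝 μ,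
      {x} ⊆ Metric.thickening ε (depthRegion (ν : Measure E) α) := by
  have hball : depthRegion (μ : Measure E) α ⊆ Metric.ball x ε :=
    hx.trans (singleton_subset_iff.2 (Metric.mem_ball_self hε))
  filter_upwards [eventually_depthRegion_subset hα₀ Metric.isOpen_ball hball] with ν hν
  obtain ⟨z, hz⟩ := depthRegion_nonempty (ν : Measure E) hα
  exact singleton_subset_iff.2 (Metric.mem_thickening_iff.2 ⟨z, hz, Metric.mem_ball'.1 (hν hz)⟩)

end LowerSemicontinuity

end TukeyDepth

lemma addHaar_hyperplane {E : Type*} [NormedAddCommGroup E] [InnerProductSpace ℝ E]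
    [FiniteDimensional ℝ E] [MeasurableSpace E] [BorelSpace E] (μ : Measure E) [μ.IsAddHaarMeasure]
    {u : E} (hu : u ≠ 0) (c : ℝ) : μ {y | ⟪y, u⟫_ℝ = c} = 0 := by
  obtain hempty | ⟨x, hx : ⟪x, u⟫_ℝ = c⟩ := {y | ⟪y, u⟫_ℝ = c}.eq_empty_or_nonempty
  · rw [hempty, measure_empty]
  let s := AffineSubspace.mk' x (LinearMap.ker (innerₛₗ ℝ u))
  have hs : (s : Set E) = {y | ⟪y, u⟫_ℝ = c} := by
    ext y
    simp [s, ← hx, inner_sub_right, sub_eq_zero, real_inner_comm u]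
  have hs_top : s ≠ ⊤ := by
    intro htop
    have : x + u ∈ s := htop ▸ AffineSubspace.mem_top ℝ E (x + u)
    exact hu (by simpa [s] using this)
  exact hs ▸ Measure.addHaar_affineSubspace μ s hs_top

theorem cent_lower_semicontinuous_general {E : Type*} [NormedAddCommGroup E]
    [InnerProductSpace ℝ E] [FiniteDimensional ℝ E] [MeasurableSpace E] [BorelSpace E]
    {μ : ProbabilityMeasure E} {α : ℝ≥0∞} {ε : ℝ}
    (hα₀ : α ≠ 0) (hα : (finrank ℝ E + 1) * α ≤ 1)
    (hnull : ∀ u c, ‖u‖ = 1 → (μ : Measure E) {y | ⟪y, u⟫_ℝ = c} = 0)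
    (hconv : HasPreconnectedMarginals (μ : Measure E))
    (hε : 0 < ε) : ∀ᶠ ν : ProbabilityMeasure E in 𝓝 μ,
      depthRegion (μ : Measure E) α ⊆ Metric.thickening ε (depthRegion (ν : Measure E) α) := by
  have hα' : finrank ℝ E * α < 1 := by
    rw [add_one_mul] at hα
    exact (ENNReal.lt_add_right (ne_top_of_le_ne_top ENNReal.one_ne_top
      (le_self_add.trans hα)) hα₀).trans_le hα
  by_cases hne : (strictDepthRegion (μ : Measure E) α).Nonempty
  · exact eventually_subset_thickening_of_subset_closure_strictDepthRegion
      (isCompact_depthRegion μ hα₀)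
      (depthRegion_subset_closure_strictDepthRegion hconv hα₀ hne) hε
  · obtain ⟨x, hx⟩ := depthRegion_nonempty (μ : Measure E) hα
    have h₀ : (0 : E) ∈ convexHull ℝ (shallowDirections (μ : Measure E) α x) :=
      not_not.1 (mt (strictDepthRegion_nonempty_of_zero_notMem_convexHull hconv hα₀ hα' hx) hne)
    have hsingle := depthRegion_subset_singleton_of_zero_mem_convexHull hconv hnull hα₀ hα' h₀
    filter_upwards [eventually_subset_thickening_of_depthRegion_subset_singleton hα₀ hα hsingle hε]
      with ν hν using hsingle.trans hν

lemma msupport_eq_support (ν : Measure ℝ) : msupport ν = ν.support := by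
  rw [Measure.support_eq_forall_isOpen]
  ext t
  exact forall_congr' fun U => forall_comm

lemma OneConvex.hasPreconnectedMarginals {d : ℕ} {μ : Measure (EuclideanSpace ℝ (Fin d))}
    (hμ : OneConvex μ) : HasPreconnectedMarginals μ :=
  fun u hu => msupport_eq_support _ ▸ (hμ u hu).isPreconnected

lemma cent_eq_depthRegion {d : ℕ} (μ : Measure (EuclideanSpace ℝ (Fin d))) :
    cent μ = depthRegion μ (1 / (d + 1)) :=
  Subset.antisymm (fun _ hx u hu => hx u _ hu le_rfl) fun _ hx u _ hu hc =>
    (hx u hu).trans (measure_mono fun _ hy => le_trans hc hy)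

/-- Lower semicontinuity of the central point set: for a continuous family of
`1`-convex absolutely continuous probability measures with supports in a single
compact set, near any parameter `q` the central point set at `q` is contained in the open
`ε`-neighborhood of the central point set at `p`. -/
theorem cent_lower_semicontinuous (d : ℕ) {P : Type*} [TopologicalSpace P]
    [SecondCountableTopology P]
    (μ : P → Measure (EuclideanSpace ℝ (Fin d)))
    (hprob : ∀ p, IsProbabilityMeasure (μ p))
    (hac : ∀ p, μ p ≪ volume)
    (hconv : ∀ p, OneConvex (μ p))
    (hcont : ∀ U : Set (EuclideanSpace ℝ (Fin d)), IsOpen U →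
      Continuous fun p => μ p U)
    (K : Set (EuclideanSpace ℝ (Fin d))) (hK : IsCompact K)
    (hsupp : ∀ p, μ p Kᶜ = 0)
    (q : P) (ε : ℝ) (hε : 0 < ε) :
    ∃ U ∈ nhds q, ∀ p ∈ U, cent (μ q) ⊆ Metric.thickening ε (cent (μ p)) := by
  let ν (p : P) : ProbabilityMeasure (EuclideanSpace ℝ (Fin d)) := ⟨μ p, hprob p⟩
  have hν : Tendsto ν (𝓝 q) (𝓝 (ν q)) :=
    tendsto_of_forall_isOpen_le_liminf' fun U hU => ((hcont U hU).tendsto q).liminf_eq.ge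
  have hnull (u c) (hu : ‖u‖ = 1) : μ q {y | ⟪y, u⟫_ℝ = c} = 0 :=
    hac q (addHaar_hyperplane volume (norm_ne_zero_iff.1 (hu ▸ one_ne_zero)) c)
  simp only [cent_eq_depthRegion]
  exact (hν.eventually (cent_lower_semicontinuous_general (by simp)
    (by simp) hnull (hconv q).hasPreconnectedMarginals hε)).exists_mem
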